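/- arXiv:2403.11471 — 2 statements merged into one kernel-verified Lean document; each statement's English description precedes it below -/
import Mathlib

section
/- Under the standard sonic-point setup with higher Taylor coefficients, assume k ≥ 3 and R ≠ 2. Then 5·(B₁ − (kR/2 − 1)δ) − 2B₂ = (k−3)a₁ + (7/2)·((k−2)a₁ + 2A − 4k) + 4(ℓ−1), and this quantity is positive. -/
open Set

/-! The coefficient `a₂` cancels from `5(B₁ − (kR/2 − 1)δ) − 2B₂`, which leaves an affine
expression in `a₁`. Its sign rests on `(k − 2)a₁ + 2A − 4k > 0`, that is, on `a₁` exceeding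
`x₀ = (4k − 2A)/(k − 2)`. As `p₀` is negative only below its larger root `a₁`, it is enough that
`p₀(x₀) < 0`.
* If `4ℓ < k²`, this follows from `(k − 2)² p₀(x₀) = −2k γ² (ℓ − 1)(k² − 4ℓ)`.
* If `k² ≤ 4ℓ`, then `A > 4`. For `A ≤ 2k` the claim follows from
  `(k − 2)² p₀(x₀) = 2k((2k − A)(4 − A) − (k − 2)² ε)`, where `(2k − A)(4 − A) ≤ 0`.
  For `A > 2k` one has instead `x₀ < 0 < a₁`, because `p₀(0) = 2(k − A)ε < 0`. -/

theorem lt_neg_add_sqrt_discrim_div_of_quadratic_neg {a b c x : ℝ} (ha : 0 < a)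
    (hx : a * x ^ 2 + b * x + c < 0) : x < (-b + √(discrim a b c)) / (2 * a) := by
  have sq_lt_discrim : (2 * a * x + b) ^ 2 < discrim a b c := by
    have completed_square :
        (2 * a * x + b) ^ 2 = discrim a b c + 4 * a * (a * x ^ 2 + b * x + c) := by
      rw [discrim]; ring
    have : 4 * a * (a * x ^ 2 + b * x + c) < 0 := mul_neg_of_pos_of_neg (by linarith) hx
    linarith
  rw [lt_div_iff₀ (by linarith)]
  linarith [Real.lt_sqrt_of_sq_lt sq_lt_discrim]

/-- The quadratic `p₀(x)` whose larger root is the first Taylor coefficient `a₁` at the sonic point.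
The parameters `ε` and `A` are left free, rather than tied to `ℓ` and `γ`. -/
def sonicPoly (k ε A x : ℝ) : ℝ :=
  x ^ 2 - ((k - 2) * ε + A) * x + 2 * (k - A) * ε

/-- The larger root `a₁` of `sonicPoly k ε A`, given by the quadratic formula; it is a root only if
the discriminant is nonnegative, as `Real.sqrt` vanishes on negative numbers. -/
noncomputable def sonicRoot (k ε A : ℝ) : ℝ :=
  (((k - 2) * ε + A) + √(((k - 2) * ε + A) ^ 2 - 8 * (k - A) * ε)) / 2

section Root

variable {k ε A : ℝ}

theorem lt_sonicRoot_of_sonicPoly_neg {x : ℝ} (hx : sonicPoly k ε A x < 0) :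
    x < sonicRoot k ε A := by
  rw [sonicPoly] at hx
  convert lt_neg_add_sqrt_discrim_div_of_quadratic_neg (a := 1)
    (b := -((k - 2) * ε + A)) (c := 2 * (k - A) * ε) (x := x) one_pos (by linarith) using 1
  rw [sonicRoot, discrim]
  ring_nf

theorem sonicRoot_pos_of_lt (hε : 0 < ε) (hA : k < A) : 0 < sonicRoot k ε A := by
  apply lt_sonicRoot_of_sonicPoly_neg
  have : 0 < (A - k) * ε := mul_pos (sub_pos.2 hA) hε
  rw [sonicPoly]
  linarith

theorem sonicPoly_div_sub_two_eq (hk : k ≠ 2) :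
    sonicPoly k ε A ((4 * k - 2 * A) / (k - 2))
      = 2 * k * ((2 * k - A) * (4 - A) - (k - 2) ^ 2 * ε) / (k - 2) ^ 2 := by
  have : k - 2 ≠ 0 := sub_ne_zero.2 hk
  rw [sonicPoly]
  field_simp
  ring

theorem div_sub_two_lt_sonicRoot_of_mul_lt (hk : 2 < k)
    (h : (2 * k - A) * (4 - A) < (k - 2) ^ 2 * ε) :
    (4 * k - 2 * A) / (k - 2) < sonicRoot k ε A := by
  apply lt_sonicRoot_of_sonicPoly_neg
  rw [sonicPoly_div_sub_two_eq hk.ne']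
  exact div_neg_of_neg_of_pos (mul_neg_of_pos_of_neg (by linarith) (sub_neg.2 h))
    (pow_pos (sub_pos.2 hk) 2)

end Root

section SonicPoint

variable {k ℓ γ ε A : ℝ}

theorem sub_two_sq_mul_sub_mul_eq (hε : ε = ℓ * γ ^ 2 - 1)
    (hA : A = k + 2 - (k - 2 * ℓ) * γ) :
    (k - 2) ^ 2 * ε - (2 * k - A) * (4 - A) = γ ^ 2 * ((ℓ - 1) * (k ^ 2 - 4 * ℓ)) := by
  rw [hε, hA]
  ring

theorem four_lt_of_sq_le_four_mul (hk : 2 < k) (hγ : 0 ≤ γ) (hA : A = k + 2 - (k - 2 * ℓ) * γ)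
    (hkℓ : k ^ 2 ≤ 4 * ℓ) : 4 < A := by
  have : 0 ≤ (2 * ℓ - k) * γ := mul_nonneg (by nlinarith) hγ
  linarith

theorem mul_lt_sub_two_sq_mul (hk : 2 < k) (hℓ : 1 < ℓ) (hγ : 0 < γ)
    (hε : ε = ℓ * γ ^ 2 - 1) (hε_pos : 0 < ε) (hA : A = k + 2 - (k - 2 * ℓ) * γ)
    (hA_le : A ≤ 2 * k) : (2 * k - A) * (4 - A) < (k - 2) ^ 2 * ε := by
  rcases lt_or_ge (4 * ℓ) (k ^ 2) with hkℓ | hkℓ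
  · rw [← sub_pos, sub_two_sq_mul_sub_mul_eq hε hA]
    exact mul_pos (pow_pos hγ 2) (mul_pos (sub_pos.2 hℓ) (sub_pos.2 hkℓ))
  · have hA_gt : 4 < A := four_lt_of_sq_le_four_mul hk hγ.le hA hkℓ
    calc (2 * k - A) * (4 - A) ≤ 0 :=
          mul_nonpos_of_nonneg_of_nonpos (sub_nonneg.2 hA_le) (sub_nonpos.2 hA_gt.le)
      _ < (k - 2) ^ 2 * ε := mul_pos (pow_pos (sub_pos.2 hk) 2) hε_pos

theorem div_sub_two_lt_sonicRoot (hk : 2 < k) (hℓ : 1 < ℓ) (hγ : 0 < γ)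
    (hε : ε = ℓ * γ ^ 2 - 1) (hε_pos : 0 < ε) (hA : A = k + 2 - (k - 2 * ℓ) * γ) :
    (4 * k - 2 * A) / (k - 2) < sonicRoot k ε A := by
  rcases lt_or_ge (2 * k) A with hA_gt | hA_le
  · calc (4 * k - 2 * A) / (k - 2) < 0 := div_neg_of_neg_of_pos (by linarith) (sub_pos.2 hk)
      _ < sonicRoot k ε A := sonicRoot_pos_of_lt hε_pos (by linarith)
  · exact div_sub_two_lt_sonicRoot_of_mul_lt hk
      (mul_lt_sub_two_sq_mul hk hℓ hγ hε hε_pos hA hA_le)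

theorem sonicRoot_pos (hk : 2 < k) (hℓ : 1 < ℓ) (hγ : 0 < γ)
    (hε : ε = ℓ * γ ^ 2 - 1) (hε_pos : 0 < ε) (hA : A = k + 2 - (k - 2 * ℓ) * γ) :
    0 < sonicRoot k ε A := by
  rcases lt_or_ge k A with hA_gt | hA_le
  · exact sonicRoot_pos_of_lt hε_pos hA_gt
  · calc 0 ≤ (4 * k - 2 * A) / (k - 2) := div_nonneg (by linarith) (sub_pos.2 hk).le
      _ < sonicRoot k ε A := div_sub_two_lt_sonicRoot hk hℓ hγ hε hε_pos hA

theorem sub_two_mul_sonicRoot_add_sub_pos (hk : 2 < k) (hℓ : 1 < ℓ) (hγ : 0 < γ)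
    (hε : ε = ℓ * γ ^ 2 - 1) (hε_pos : 0 < ε) (hA : A = k + 2 - (k - 2 * ℓ) * γ) :
    0 < (k - 2) * sonicRoot k ε A + 2 * A - 4 * k := by
  have lt_root := div_sub_two_lt_sonicRoot hk hℓ hγ hε hε_pos hA
  rw [div_lt_iff₀' (sub_pos.2 hk)] at lt_root
  linarith

end SonicPoint

theorem combination_eq {k ℓ ε A B a₁ δ R a₂ B₁ B₂ : ℝ}
    (hB : B = 2 * k + 1 - ℓ) (hδ : δ = A + k * ε - a₁) (hRδ : R * δ = a₁ + 2 * ε)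
    (hB₁ : B₁ = (3 * k - 1) * a₁ - 2 * a₂ - 2 * (k + B))
    (hB₂ : B₂ = -5 * a₂ + 4 * k * a₁ - (2 * k + A + 3 * B)) :
    5 * (B₁ - (k * R / 2 - 1) * δ) - 2 * B₂
      = (k - 3) * a₁ + (7 / 2) * ((k - 2) * a₁ + 2 * A - 4 * k) + 4 * (ℓ - 1) := by
  have mul_δ : (k * R / 2 - 1) * δ = k / 2 * (a₁ + 2 * ε) - δ := by
    rw [← hRδ]; ring
  rw [mul_δ, hB₁, hB₂, hδ, hB]
  ring

theorem combination_positive_k_ge_three_general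
    {k ℓ γ ε A B a₁ δ R a₂ B₁ B₂ : ℝ} (hk : 3 ≤ k) (hℓ : 1 < ℓ) (hγ : 0 < γ)
    (hε : ε = ℓ * γ ^ 2 - 1) (hε_pos : 0 < ε) (hA : A = k + 2 - (k - 2 * ℓ) * γ)
    (hB : B = 2 * k + 1 - ℓ) (ha₁ : a₁ = sonicRoot k ε A)
    (hδ : δ = A + k * ε - a₁) (hRδ : R * δ = a₁ + 2 * ε)
    (hB₁ : B₁ = (3 * k - 1) * a₁ - 2 * a₂ - 2 * (k + B))
    (hB₂ : B₂ = -5 * a₂ + 4 * k * a₁ - (2 * k + A + 3 * B)) :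
    5 * (B₁ - (k * R / 2 - 1) * δ) - 2 * B₂
      = (k - 3) * a₁ + (7 / 2) * ((k - 2) * a₁ + 2 * A - 4 * k) + 4 * (ℓ - 1) ∧
    0 < 5 * (B₁ - (k * R / 2 - 1) * δ) - 2 * B₂ := by
  have identity := combination_eq hB hδ hRδ hB₁ hB₂
  have hk_two : 2 < k := by linarith
  have root_pos : 0 < a₁ := ha₁ ▸ sonicRoot_pos hk_two hℓ hγ hε hε_pos hA
  have linear_pos : 0 < (k - 2) * a₁ + 2 * A - 4 * k :=
    ha₁ ▸ sub_two_mul_sonicRoot_add_sub_pos hk_two hℓ hγ hε hε_pos hA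
  have : 0 ≤ (k - 3) * a₁ := mul_nonneg (sub_nonneg.2 hk) root_pos.le
  exact ⟨identity, by linarith⟩

/-- For `k ≥ 3`, the combination `5(B₁ − (kR/2 − 1)δ) − 2B₂` is positive. -/
theorem combination_positive_k_ge_three
    (k : ℕ) (hk : 1 ≤ k) (ℓ γ ε A B a₁ δ R : ℝ)
    (hℓ : 1 < ℓ) (hγ : 1 / Real.sqrt ℓ < γ)
    (hε : ε = ℓ * γ ^ 2 - 1) (hεpos : 0 < ε)
    (hA : A = (k : ℝ) + 2 - ((k : ℝ) - 2 * ℓ) * γ)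
    (hB : B = 2 * (k : ℝ) + 1 - ℓ)
    (hdisc : 0 < (((k : ℝ) - 2) * ε + A) ^ 2 - 8 * ((k : ℝ) - A) * ε)
    (ha₁ : a₁ = ((((k : ℝ) - 2) * ε + A)
        + Real.sqrt ((((k : ℝ) - 2) * ε + A) ^ 2 - 8 * ((k : ℝ) - A) * ε)) / 2)
    (hδ : δ = A + (k : ℝ) * ε - a₁) (hδpos : 0 < δ)
    (hR : R = (a₁ + 2 * ε) / δ) (hR1 : 1 < R)
    (hRδ : R * δ = a₁ + 2 * ε)
    (hR1δ : (R + 1) * δ = ((k : ℝ) + 2) * ε + A)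
    (hRδ2 : R * δ ^ 2 = 2 * (k : ℝ) * ε * (1 + ε))
    (a₂ B₁ B₂ : ℝ)
    (ha₂ : a₂ = (((k : ℝ) - 1) * a₁ ^ 2 - (B - A + 2 * (k : ℝ)) * a₁ + 2 * ((k : ℝ) - B) * ε)
        / ((R - 2) * δ))
    (hB₁ : B₁ = (3 * (k : ℝ) - 1) * a₁ - 2 * a₂ - 2 * ((k : ℝ) + B))
    (hB₂ : B₂ = -5 * a₂ + 4 * (k : ℝ) * a₁ - (2 * (k : ℝ) + A + 3 * B))
    (hk3 : 3 ≤ k) (hR2 : R ≠ 2) :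
    5 * (B₁ - ((k : ℝ) * R / 2 - 1) * δ) - 2 * B₂
      = ((k : ℝ) - 3) * a₁ + (7 / 2) * (((k : ℝ) - 2) * a₁ + 2 * A - 4 * (k : ℝ))
        + 4 * (ℓ - 1) ∧
    0 < 5 * (B₁ - ((k : ℝ) * R / 2 - 1) * δ) - 2 * B₂ := by
  have hγ_pos : 0 < γ := (by positivity : 0 ≤ 1 / √ℓ).trans_lt hγ
  exact combination_positive_k_ge_three_general (by exact_mod_cast hk3) hℓ hγ_pos hε hεpos hA hB ha₁
    hδ hRδ hB₁ hB₂
end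

section
/- Under the standard sonic-point setup, let μ := (k+2)² − (k−2ℓ)²/ℓ and assume kR > 2. Then (2R + k + 4)·A = (2 − k/R)·(R + 1)·a₁ + μ. -/
open Set

/-!
Eliminate `A` and `a₁` in favour of `R` and `δ`, through `A = (R + 1) δ − (k + 2) ε` and
`a₁ = R δ − 2 ε`. Squaring `k + 2 − A = (k − 2ℓ) γ` and using `1 + ε = ℓ γ²` expresses
`(1 + ε) μ` as a quadratic in `δ`. That `a₁` is a root of `p₀` means `R δ² = 2 k ε (1 + ε)`,
so in `R (1 + ε) μ` the factor `1 + ε` cancels, and what is left is linear in `δ`.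
-/

/-- The quadratic `p₀`, whose larger root in the sonic-point setup is `a₁`. -/
def sonicQuadratic {K : Type*} [CommRing K] (k ε A x : K) : K :=
  x ^ 2 - ((k - 2) * ε + A) * x + 2 * (k - A) * ε

theorem sonicQuadratic_eq_zero_iff {K : Type*} [CommRing K] {k ε A x : K} :
    sonicQuadratic k ε A x = 0 ↔ (x + 2 * ε) * (A + k * ε - x) = 2 * k * ε * (1 + ε) := by
  have product_eq : (x + 2 * ε) * (A + k * ε - x)
      = 2 * k * ε * (1 + ε) - sonicQuadratic k ε A x := by
    unfold sonicQuadratic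
    ring
  rw [product_eq, sub_eq_self]

theorem mul_mu_eq {K : Type*} [CommRing K] [IsDomain K] {k ε A δ R μ : K} (hε0 : 1 + ε ≠ 0)
    (hR1δ : (R + 1) * δ = (k + 2) * ε + A) (hRδ2 : R * δ ^ 2 = 2 * k * ε * (1 + ε))
    (hμ : μ * (1 + ε) = (k + 2) ^ 2 * (1 + ε) - (k + 2 - A) ^ 2) :
    R * μ = 2 * R * (R + 1) * (k + 2) * δ - R * (k + 2) ^ 2 * ε - 2 * k * ε * (R + 1) ^ 2 := by
  have sub_A : k + 2 - A = (k + 2) * (1 + ε) - (R + 1) * δ := by linear_combination hR1δ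
  rw [sub_A] at hμ
  refine mul_right_cancel₀ hε0 ?_
  linear_combination R * hμ - (R + 1) ^ 2 * hRδ2

section

variable {K : Type*} [Field K] {k ℓ γ ε A a₁ δ R μ : K}

theorem mu_mul_one_add (hε : ε = ℓ * γ ^ 2 - 1) (hε0 : 1 + ε ≠ 0)
    (hA : A = k + 2 - (k - 2 * ℓ) * γ) (hμ : μ = (k + 2) ^ 2 - (k - 2 * ℓ) ^ 2 / ℓ) :
    μ * (1 + ε) = (k + 2) ^ 2 * (1 + ε) - (k + 2 - A) ^ 2 := by
  have one_add_eq : 1 + ε = ℓ * γ ^ 2 := by rw [hε, add_sub_cancel]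
  have hℓ : ℓ ≠ 0 := left_ne_zero_of_mul (one_add_eq ▸ hε0)
  rw [one_add_eq, hμ, hA]
  field_simp
  ring

theorem A_a1_mu_identity_general (hε : ε = ℓ * γ ^ 2 - 1) (hε0 : 1 + ε ≠ 0)
    (hA : A = k + 2 - (k - 2 * ℓ) * γ) (ha₁ : sonicQuadratic k ε A a₁ = 0)
    (hδ : δ = A + k * ε - a₁) (hRδ : R * δ = a₁ + 2 * ε) (hR0 : R ≠ 0)
    (hμ : μ = (k + 2) ^ 2 - (k - 2 * ℓ) ^ 2 / ℓ) :
    (2 * R + k + 4) * A = (2 - k / R) * (R + 1) * a₁ + μ := by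
  have hR1δ : (R + 1) * δ = (k + 2) * ε + A := by linear_combination hRδ + hδ
  have hRδ2 : R * δ ^ 2 = 2 * k * ε * (1 + ε) := by
    rw [← sonicQuadratic_eq_zero_iff.mp ha₁, ← hRδ, ← hδ]
    ring
  have hRμ := mul_mu_eq hε0 hR1δ hRδ2 (mu_mul_one_add hε hε0 hA hμ)
  obtain rfl : A = (R + 1) * δ - (k + 2) * ε := by linear_combination -hR1δ
  obtain rfl : a₁ = R * δ - 2 * ε := by linear_combination -hRδ
  field_simp
  linear_combination -hRμ

end

/-- The identity `(2R + k + 4) A = (2 − k/R)(R + 1) a₁ + μ`. -/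
theorem A_a1_mu_identity
    (k : ℕ) (hk : 1 ≤ k) (ℓ γ ε A B a₁ δ R : ℝ)
    (hℓ : 1 < ℓ) (hγ : 1 / Real.sqrt ℓ < γ)
    (hε : ε = ℓ * γ ^ 2 - 1) (hεpos : 0 < ε)
    (hA : A = (k : ℝ) + 2 - ((k : ℝ) - 2 * ℓ) * γ)
    (hB : B = 2 * (k : ℝ) + 1 - ℓ)
    (hdisc : 0 < (((k : ℝ) - 2) * ε + A) ^ 2 - 8 * ((k : ℝ) - A) * ε)
    (ha₁ : a₁ = ((((k : ℝ) - 2) * ε + A)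
        + Real.sqrt ((((k : ℝ) - 2) * ε + A) ^ 2 - 8 * ((k : ℝ) - A) * ε)) / 2)
    (hδ : δ = A + (k : ℝ) * ε - a₁) (hδpos : 0 < δ)
    (hR : R = (a₁ + 2 * ε) / δ) (hR1 : 1 < R)
    (hRδ : R * δ = a₁ + 2 * ε)
    (hR1δ : (R + 1) * δ = ((k : ℝ) + 2) * ε + A)
    (hRδ2 : R * δ ^ 2 = 2 * (k : ℝ) * ε * (1 + ε))
    (μ : ℝ)
    (hμ : μ = ((k : ℝ) + 2) ^ 2 - ((k : ℝ) - 2 * ℓ) ^ 2 / ℓ)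
    (hkR : 2 < (k : ℝ) * R) :
    (2 * R + (k : ℝ) + 4) * A = (2 - (k : ℝ) / R) * (R + 1) * a₁ + μ := by
  have ha₁_root : sonicQuadratic (k : ℝ) ε A a₁ = 0 := sonicQuadratic_eq_zero_iff.mpr <| by
    rw [← hRδ, ← hδ, mul_assoc, ← sq, hRδ2]
  exact A_a1_mu_identity_general hε (by positivity) hA ha₁_root hδ hRδ (by positivity) hμ
end
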